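/- Fix β with 0 < β < 1/2 and J ≥ 0 with βJ < 1/2. Let σ and σ' be independent, each uniformly distributed on {−1,+1}^n, let δ_n → 0 with √n·δ_n → ∞, and set Ω_n := { τ ∈ {−1,+1}^n : |Σ_{i=1}^n τ_i| ≤ n δ_n }. Then E[ 1_{σ ∈ Ω_n} · 1_{σ' ∈ Ω_n} · exp{ (2β²/n)(Σ_{i=1}^n σ_i σ'_i)² + (βJ/n)(Σ_{i=1}^n σ_i)² + (βJ/n)(Σ_{i=1}^n σ'_i)² } ] → 1/( √(1 − 4β²) · (1 − 2βJ) ) as n → ∞. -/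

import Mathlib

/-!
The Hubbard–Stratonovich identity `exp (a y ^ 2) = 𝔼 exp (√(2 a) g y)`, with `g` standard
Gaussian, turns the exponential of the three squares into the truncated joint moment generating
function of `(∑ σᵢ σ'ᵢ, ∑ σᵢ, ∑ σ'ᵢ) / √n`, evaluated at a Gaussian vector `h`. The three summands
attached to one site are uncorrelated signs, so without the truncation this generating function
converges to `exp (‖h‖² / 2)`; as `√n δₙ → ∞`, a Chernoff bound shows that the truncation does not
change the limit. Integrating over `h` gives one factor `(1 - 2 a)^(-1/2)` per square.

The truncation is what makes the convergence dominated: three merely uncorrelated signs do not have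
a generating function below `exp (‖h‖² / 2)`. Averaging over `σ'` first costs
`exp ((h₀² + h₂²) / 2 + h₀ h₂ ∑ σᵢ / n)`, and `|∑ σᵢ| ≤ n δₙ` leaves only a factor `1 + δₙ` in front
of the variances, which the strict inequalities `2 a < 1` absorb.
-/

open MeasureTheory Filter Finset Topology

noncomputable section

/-- The spin value of a Boolean. -/
def spin (b : Bool) : ℝ := if b then 1 else -1

open Real ProbabilityTheory
open scoped BigOperators

section MomentGeneratingFunction

variable {ι κ : Type*} [Fintype ι] [Fintype κ]

lemma expect_prod_apply [DecidableEq ι] (f : ι → κ → ℝ) :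
    𝔼 ω : ι → κ, ∏ i, f i (ω i) = ∏ i, 𝔼 b, f i b := by
  simp only [Fintype.expect_eq_sum_div_card, prod_div_distrib, prod_univ_sum,
    Fintype.piFinset_univ, prod_const, card_univ, Fintype.card_fun, Nat.cast_pow]

lemma tendsto_sq_mul_exp_div_sub_atTop (c : ℝ) :
    Tendsto (fun s ↦ s ^ 2 * (exp (c / s) - 1 - c / s)) atTop (𝓝 (c ^ 2 / 2)) := by
  have htaylor := ((exp_sub_sum_range_succ_isLittleO_pow 2).comp_tendsto
    (tendsto_id.const_div_atTop c)).tendsto_div_nhds_zero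
  have h := (htaylor.const_mul (c ^ 2)).add_const (c ^ 2 / 2)
  rw [mul_zero, zero_add] at h
  refine h.congr' ?_
  filter_upwards [eventually_ne_atTop 0] with s hs
  simp only [Function.comp_apply, id_eq, sum_range_succ, sum_range_zero, Nat.factorial]
  rcases eq_or_ne c 0 with rfl | hc
  · simp
  · push_cast
    field_simp
    ring

theorem tendsto_expect_exp_sum_div_sqrt [Nonempty κ] {X : κ → ℝ} (hX : 𝔼 b, X b = 0) :
    Tendsto (fun n : ℕ ↦ 𝔼 ω : Fin n → κ, exp ((∑ i, X (ω i)) / √n)) atTop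
      (𝓝 (exp ((𝔼 b, X b ^ 2) / 2))) := by
  have hterm (n : ℕ) : 𝔼 ω : Fin n → κ, exp ((∑ i, X (ω i)) / √n) =
      (1 + 𝔼 b, (exp (X b / √n) - 1 - X b / √n)) ^ n := by
    have hprod := expect_prod_apply fun (_ : Fin n) b ↦ exp (X b / √n)
    simp only [← exp_sum, ← sum_div, prod_const, card_univ, Fintype.card_fin] at hprod
    rw [hprod, expect_sub_distrib, expect_sub_distrib, ← expect_div, hX, Fintype.expect_const,
      zero_div, sub_zero, add_sub_cancel]
  have hlim (c : ℝ) :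
      Tendsto (fun n : ℕ ↦ n * (exp (c / √n) - 1 - c / √n)) atTop (𝓝 (c ^ 2 / 2)) :=
    ((tendsto_sq_mul_exp_div_sub_atTop c).comp
      (tendsto_sqrt_atTop.comp tendsto_natCast_atTop_atTop)).congr fun n ↦ by simp
  simp only [hterm]
  apply tendsto_one_add_pow_exp_of_tendsto
  simp only [mul_expect, expect_div]
  simp only [Fintype.expect_eq_sum_div_card]
  exact (tendsto_finsetSum _ fun b _ ↦ hlim (X b)).div_const _

end MomentGeneratingFunction

section Truncation

variable {K : Type*} [Fintype K]

lemma exp_dotProduct_le_of_le_abs [DecidableEq K] (h y : K → ℝ) {k : K} {t : ℝ}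
    (hk : t ≤ |y k|) :
    exp (h ⬝ᵥ y) ≤
      exp (-t) * (exp ((h + Pi.single k 1) ⬝ᵥ y) + exp ((h - Pi.single k 1) ⬝ᵥ y)) := by
  have hy : 1 ≤ exp (-t) * (exp (y k) + exp (-y k)) :=
    calc 1 ≤ exp (-t) * exp |y k| := by rw [← exp_add]; exact one_le_exp (by linarith)
      _ ≤ exp (-t) * (exp (y k) + exp (-y k)) := by gcongr; exact exp_abs_le _
  calc exp (h ⬝ᵥ y) ≤ exp (h ⬝ᵥ y) * (exp (-t) * (exp (y k) + exp (-y k))) :=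
        le_mul_of_one_le_right (exp_pos _).le hy
    _ = _ := by
      rw [add_dotProduct, sub_dotProduct, single_one_dotProduct, sub_eq_add_neg, exp_add, exp_add]
      ring

lemma exp_dotProduct_sub_le_indicator_mul [DecidableEq K] {Ω : Type*} {A : Set Ω} {Y : Ω → K → ℝ}
    {t : ℝ} (hA : ∀ ω ∉ A, ∃ k, t ≤ |Y ω k|) (h : K → ℝ) (ω : Ω) :
    exp (h ⬝ᵥ Y ω) - exp (-t) *
        ∑ k, (exp ((h + Pi.single k 1) ⬝ᵥ Y ω) + exp ((h - Pi.single k 1) ⬝ᵥ Y ω)) ≤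
      A.indicator 1 ω * exp (h ⬝ᵥ Y ω) := by
  by_cases hω : ω ∈ A
  · simp only [Set.indicator_of_mem hω, Pi.one_apply, one_mul, sub_le_self_iff]
    positivity
  · obtain ⟨k, hk⟩ := hA ω hω
    simp only [Set.indicator_of_notMem hω, zero_mul, sub_nonpos]
    refine (exp_dotProduct_le_of_le_abs h _ hk).trans ?_
    gcongr
    exact single_le_sum (f := fun k ↦ exp ((h + Pi.single k 1) ⬝ᵥ Y ω) +
      exp ((h - Pi.single k 1) ⬝ᵥ Y ω)) (fun _ _ ↦ by positivity) (mem_univ k)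

theorem tendsto_expect_indicator_mul_exp_dotProduct {α : Type*} {l : Filter α} {Ω : α → Type*}
    [∀ i, Fintype (Ω i)] {Y : ∀ i, Ω i → K → ℝ} {A : ∀ i, Set (Ω i)} {T : α → ℝ}
    {M : (K → ℝ) → ℝ} (hT : Tendsto T l atTop)
    (hA : ∀ᶠ i in l, ∀ ω ∉ A i, ∃ k, T i ≤ |Y i ω k|)
    (hM : ∀ h, Tendsto (fun i ↦ 𝔼 ω, exp (h ⬝ᵥ Y i ω)) l (𝓝 (M h))) (h : K → ℝ) :
    Tendsto (fun i ↦ 𝔼 ω, (A i).indicator 1 ω * exp (h ⬝ᵥ Y i ω)) l (𝓝 (M h)) := by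
  classical
  have hlower := (hM h).sub <| (tendsto_exp_neg_atTop_nhds_zero.comp hT).mul <|
    tendsto_finsetSum univ fun k _ ↦ (hM (h + Pi.single k 1)).add (hM (h - Pi.single k 1))
  rw [zero_mul, sub_zero] at hlower
  refine tendsto_of_tendsto_of_tendsto_of_le_of_le' hlower (hM h) ?_ (.of_forall fun i ↦ ?_)
  · filter_upwards [hA] with i hi
    simp only [Function.comp_apply, ← expect_add_distrib, ← expect_sum_comm, mul_expect,
      ← expect_sub_distrib]
    exact expect_le_expect fun ω _ ↦ exp_dotProduct_sub_le_indicator_mul hi h ω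
  · exact expect_le_expect fun ω _ ↦
      mul_le_of_le_one_left (exp_pos _).le (Set.indicator_le_self' (by simp) ω)

end Truncation

section GaussianLinearization

variable {K : Type*}

/-- The random linear field `k ↦ √(2 aₖ) xₖ` that linearizes the quadratic form `∑ aₖ yₖ²`. -/
def gaussianField (a x : K → ℝ) (k : K) : ℝ := √(2 * a k) * x k

lemma gaussianField_sq {a : K → ℝ} (ha : ∀ k, 0 ≤ a k) (x : K → ℝ) (k : K) :
    gaussianField a x k ^ 2 = 2 * a k * x k ^ 2 := by
  rw [gaussianField, mul_pow, sq_sqrt (by linarith [ha k])]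

variable [Fintype K]

lemma gaussianPDFReal_mul_exp_mul_sq (c x : ℝ) :
    gaussianPDFReal 0 1 x * exp (c * x ^ 2) = (√(2 * π))⁻¹ * exp (-(1 / 2 - c) * x ^ 2) := by
  rw [gaussianPDFReal, mul_assoc, ← exp_add]
  simp only [NNReal.coe_one, mul_one, sub_zero]
  ring_nf

lemma integrable_exp_mul_sq_gaussianReal {c : ℝ} (hc : 2 * c < 1) :
    Integrable (fun x ↦ exp (c * x ^ 2)) (gaussianReal 0 1) := by
  rw [gaussianReal_of_var_ne_zero 0 one_ne_zero, integrable_withDensity_iff_integrable_smul'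
    (measurable_gaussianPDF 0 1) (.of_forall fun _ ↦ gaussianPDF_lt_top)]
  simp only [toReal_gaussianPDF, smul_eq_mul, gaussianPDFReal_mul_exp_mul_sq]
  exact (integrable_exp_neg_mul_sq (by linarith)).const_mul _

/-- For `1 ≤ 2 * c` the integral diverges, and both sides are `0` by convention. -/
lemma integral_exp_mul_sq_gaussianReal (c : ℝ) :
    ∫ x, exp (c * x ^ 2) ∂gaussianReal 0 1 = (√(1 - 2 * c))⁻¹ := by
  have hpi : 0 ≤ (2 * π)⁻¹ := by positivity
  have hscale : (2 * π)⁻¹ * (π / (1 / 2 - c)) = (1 - 2 * c)⁻¹ := by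
    rw [show 1 / 2 - c = (1 - 2 * c) / 2 by ring]
    field_simp
  simp only [integral_gaussianReal_eq_integral_smul one_ne_zero, smul_eq_mul,
    gaussianPDFReal_mul_exp_mul_sq, integral_const_mul, integral_gaussian]
  rw [← sqrt_inv, ← sqrt_inv, ← sqrt_mul hpi, hscale]

lemma integral_exp_mul_gaussianReal (t : ℝ) :
    ∫ x, exp (t * x) ∂gaussianReal 0 1 = exp (t ^ 2 / 2) := by
  simpa [mgf] using congrFun (mgf_id_gaussianReal (μ := 0) (v := 1)) t

/-- The standard Gaussian measure on `K → ℝ`, the mixing law of the Hubbard–Stratonovich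
linearization. -/
def stdGaussianPi (K : Type*) [Fintype K] : Measure (K → ℝ) :=
  Measure.pi fun _ ↦ gaussianReal 0 1

lemma integrable_exp_dotProduct_stdGaussianPi (t : K → ℝ) :
    Integrable (fun x ↦ exp (t ⬝ᵥ x)) (stdGaussianPi K) := by
  simp only [dotProduct, exp_sum]
  exact .fintype_prod fun k ↦ integrable_exp_mul_gaussianReal (t k)

lemma integral_exp_dotProduct_stdGaussianPi (t : K → ℝ) :
    ∫ x, exp (t ⬝ᵥ x) ∂stdGaussianPi K = exp (t ⬝ᵥ t / 2) := by
  simp only [dotProduct, exp_sum, sum_div]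
  rw [stdGaussianPi, integral_fintype_prod_eq_prod fun k x ↦ exp (t k * x)]
  simp only [integral_exp_mul_gaussianReal, sq]

lemma integrable_exp_sum_mul_sq_stdGaussianPi {c : K → ℝ} (hc : ∀ k, 2 * c k < 1) :
    Integrable (fun x ↦ exp (∑ k, c k * x k ^ 2)) (stdGaussianPi K) := by
  simp only [exp_sum]
  exact .fintype_prod (f := fun k x ↦ exp (c k * x ^ 2))
    fun k ↦ integrable_exp_mul_sq_gaussianReal (hc k)

lemma integral_exp_sum_mul_sq_stdGaussianPi (c : K → ℝ) :
    ∫ x, exp (∑ k, c k * x k ^ 2) ∂stdGaussianPi K = ∏ k, (√(1 - 2 * c k))⁻¹ := by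
  simp only [exp_sum]
  rw [stdGaussianPi, integral_fintype_prod_eq_prod fun k x ↦ exp (c k * x ^ 2)]
  simp only [integral_exp_mul_sq_gaussianReal]

lemma gaussianField_dotProduct_comm (a x y : K → ℝ) :
    gaussianField a x ⬝ᵥ y = gaussianField a y ⬝ᵥ x :=
  sum_congr rfl fun _ _ ↦ mul_right_comm _ _ _

lemma exp_sum_mul_sq_eq_integral {a : K → ℝ} (ha : ∀ k, 0 ≤ a k) (y : K → ℝ) :
    exp (∑ k, a k * y k ^ 2) = ∫ x, exp (gaussianField a x ⬝ᵥ y) ∂stdGaussianPi K := by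
  simp only [gaussianField_dotProduct_comm a _ y, integral_exp_dotProduct_stdGaussianPi]
  simp only [dotProduct, ← sq, gaussianField_sq ha, sum_div]
  exact congrArg exp (sum_congr rfl fun k _ ↦ by ring)

lemma integrable_exp_gaussianField_dotProduct (a y : K → ℝ) :
    Integrable (fun x ↦ exp (gaussianField a x ⬝ᵥ y)) (stdGaussianPi K) := by
  simp only [gaussianField_dotProduct_comm a _ y]
  exact integrable_exp_dotProduct_stdGaussianPi _

lemma expect_mul_exp_sum_mul_sq_eq_integral {Ω : Type*} [Fintype Ω] (w : Ω → ℝ) (Y : Ω → K → ℝ)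
    {a : K → ℝ} (ha : ∀ k, 0 ≤ a k) :
    𝔼 ω, w ω * exp (∑ k, a k * Y ω k ^ 2) =
      ∫ x, 𝔼 ω, w ω * exp (gaussianField a x ⬝ᵥ Y ω) ∂stdGaussianPi K := by
  simp only [Fintype.expect_eq_sum_div_card, integral_div, exp_sum_mul_sq_eq_integral ha]
  rw [integral_finsetSum _ fun ω _ ↦
    (integrable_exp_gaussianField_dotProduct a (Y ω)).const_mul (w ω)]
  simp only [integral_const_mul]

theorem tendsto_expect_mul_exp_sum_mul_sq {α : Type*} {l : Filter α} [l.IsCountablyGenerated]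
    {Ω : α → Type*} [∀ i, Fintype (Ω i)] {w : ∀ i, Ω i → ℝ} {Y : ∀ i, Ω i → K → ℝ}
    {a v : K → ℝ} (hw : ∀ i ω, 0 ≤ w i ω) (ha : ∀ k, 0 ≤ a k) (hav : ∀ k, 2 * (a k * v k) < 1)
    (hlim : ∀ h, Tendsto (fun i ↦ 𝔼 ω, w i ω * exp (h ⬝ᵥ Y i ω)) l (𝓝 (exp (h ⬝ᵥ h / 2))))
    (hbound : ∀ᶠ i in l, ∀ h, 𝔼 ω, w i ω * exp (h ⬝ᵥ Y i ω) ≤ exp ((∑ k, v k * h k ^ 2) / 2)) :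
    Tendsto (fun i ↦ 𝔼 ω, w i ω * exp (∑ k, a k * Y i ω k ^ 2)) l
      (𝓝 (∏ k, (√(1 - 2 * a k))⁻¹)) := by
  have hfield (v x : K → ℝ) :
      (∑ k, v k * gaussianField a x k ^ 2) / 2 = ∑ k, a k * v k * x k ^ 2 := by
    simp only [gaussianField_sq ha, sum_div]
    exact sum_congr rfl fun k _ ↦ by ring
  simp only [expect_mul_exp_sum_mul_sq_eq_integral _ _ ha,
    ← integral_exp_sum_mul_sq_stdGaussianPi]
  refine tendsto_integral_filter_of_dominated_convergence
    (fun x ↦ exp (∑ k, a k * v k * x k ^ 2)) (.of_forall fun i ↦ ?_) ?_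
    (integrable_exp_sum_mul_sq_stdGaussianPi hav) (.of_forall fun x ↦ ?_)
  · simp only [Fintype.expect_eq_sum_div_card]
    exact ((integrable_finsetSum _ fun ω _ ↦ (integrable_exp_gaussianField_dotProduct a
      (Y i ω)).const_mul (w i ω)).div_const _).aestronglyMeasurable
  · filter_upwards [hbound] with i hi
    refine .of_forall fun x ↦ ?_
    rw [norm_of_nonneg (expect_nonneg fun ω _ ↦ mul_nonneg (hw i ω) (exp_pos _).le), ← hfield]
    exact hi _
  · have hone := hfield 1 x
    simp only [Pi.one_apply, one_mul, mul_one] at hone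
    simpa only [dotProduct, ← sq, hone] using hlim (gaussianField a x)

end GaussianLinearization

section Spins

variable {ι : Type*} [Fintype ι]

/-- The total magnetization `∑ᵢ σᵢ`. -/
def spinSum (σ : ι → Bool) : ℝ := ∑ i, spin (σ i)

/-- The unnormalized replica overlap `∑ᵢ σᵢ σ'ᵢ`. -/
def overlap (σ σ' : ι → Bool) : ℝ := ∑ i, spin (σ i) * spin (σ' i)

/-- The vector `(∑ σᵢ σ'ᵢ, ∑ σᵢ, ∑ σ'ᵢ)` of fluctuations of a pair of replicas `(σ, σ')`. -/
def replicaSums (ω : (ι → Bool) × (ι → Bool)) : Fin 3 → ℝ :=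
  ![overlap ω.1 ω.2, spinSum ω.1, spinSum ω.2]

/-- The event `Ω_n × Ω_n` that both replicas have magnetization at most `t` in absolute value. -/
def smallSpinSums (ι : Type*) [Fintype ι] (t : ℝ) : Set ((ι → Bool) × (ι → Bool)) :=
  {ω | |spinSum ω.1| ≤ t ∧ |spinSum ω.2| ≤ t}

lemma spin_sq (b : Bool) : spin b ^ 2 = 1 := by cases b <;> simp [spin]

lemma dotProduct_replicaSums (h : Fin 3 → ℝ) (ω : (ι → Bool) × (ι → Bool)) :
    h ⬝ᵥ replicaSums ω =
      ∑ i, (h 0 * (spin (ω.1 i) * spin (ω.2 i)) + h 1 * spin (ω.1 i) + h 2 * spin (ω.2 i)) := by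
  simp [replicaSums, overlap, spinSum, dotProduct, Fin.sum_univ_three, sum_add_distrib, mul_sum]

theorem tendsto_expect_exp_dotProduct_replicaSums (h : Fin 3 → ℝ) :
    Tendsto (fun n : ℕ ↦ 𝔼 ω : (Fin n → Bool) × (Fin n → Bool),
      exp (h ⬝ᵥ ((√n)⁻¹ • replicaSums ω))) atTop (𝓝 (exp (h ⬝ᵥ h / 2))) := by
  let X (b : Bool × Bool) : ℝ := h 0 * (spin b.1 * spin b.2) + h 1 * spin b.1 + h 2 * spin b.2
  have hmean : 𝔼 b, X b = 0 := by
    simp only [X, Fintype.expect_eq_sum_div_card, Fintype.sum_prod_type, Fintype.sum_bool, spin,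
      if_true, Bool.false_eq_true, if_false]
    ring
  have hvar : 𝔼 b, X b ^ 2 = h ⬝ᵥ h := by
    simp only [X, Fintype.expect_eq_sum_div_card, Fintype.sum_prod_type, Fintype.sum_bool, spin,
      if_true, Bool.false_eq_true, if_false, Fintype.card_prod, Fintype.card_bool, dotProduct,
      Fin.sum_univ_three]
    push_cast
    ring
  rw [← hvar]
  refine (tendsto_expect_exp_sum_div_sqrt hmean).congr fun n ↦ ?_
  refine Fintype.expect_equiv (Equiv.arrowProdEquivProdArrow _ _ _) _ _ fun ω ↦ ?_
  rw [dotProduct_smul, dotProduct_replicaSums, smul_eq_mul, inv_mul_eq_div]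
  rfl

variable [DecidableEq ι]

lemma expect_exp_sum_mul_spin_le (x : ι → ℝ) :
    𝔼 σ : ι → Bool, exp (∑ i, x i * spin (σ i)) ≤ exp ((∑ i, x i ^ 2) / 2) := by
  simp only [exp_sum, sum_div, expect_prod_apply fun i b ↦ exp (x i * spin b)]
  refine prod_le_prod (fun i _ ↦ expect_nonneg fun b _ ↦ (exp_pos _).le) fun i _ ↦ ?_
  refine (le_of_eq ?_).trans (cosh_le_exp_half_sq (x i))
  rw [Fintype.expect_eq_sum_div_card, Fintype.sum_bool, Fintype.card_bool, cosh_eq]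
  simp [spin]

/-- Conditionally on `σ`, the spins of `σ'` feel the fields `h₀ σᵢ + h₂`, and the sum of their
squares depends on `σ` only through its magnetization, which the truncation controls. -/
lemma expect_exp_dotProduct_replicaSums_le (h : Fin 3 → ℝ) (σ : ι → Bool) :
    𝔼 σ', exp (h ⬝ᵥ replicaSums (σ, σ')) ≤
      exp (Fintype.card ι * (h 0 ^ 2 + h 2 ^ 2) / 2 + h 0 * h 2 * spinSum σ) *
        exp (∑ i, h 1 * spin (σ i)) := by
  have hsq : (∑ i, (h 0 * spin (σ i) + h 2) ^ 2) / 2 =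
      Fintype.card ι * (h 0 ^ 2 + h 2 ^ 2) / 2 + h 0 * h 2 * spinSum σ := by
    have hi (i : ι) : (h 0 * spin (σ i) + h 2) ^ 2 =
        h 0 ^ 2 + h 2 ^ 2 + 2 * (h 0 * h 2) * spin (σ i) := by
      linear_combination h 0 ^ 2 * spin_sq (σ i)
    simp only [hi, sum_add_distrib, ← mul_sum, sum_const, card_univ, nsmul_eq_mul, spinSum]
    ring
  rw [← hsq]
  calc 𝔼 σ', exp (h ⬝ᵥ replicaSums (σ, σ'))
      = (𝔼 σ' : ι → Bool, exp (∑ i, (h 0 * spin (σ i) + h 2) * spin (σ' i))) *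
          exp (∑ i, h 1 * spin (σ i)) := by
        simp only [expect_mul, ← exp_add, ← sum_add_distrib, dotProduct_replicaSums]
        refine expect_congr rfl fun σ' _ ↦ congrArg exp (sum_congr rfl fun i _ ↦ by ring)
    _ ≤ _ := by
        gcongr
        exact expect_exp_sum_mul_spin_le _

theorem expect_indicator_smallSpinSums_mul_exp_le (h : Fin 3 → ℝ) (t : ℝ) :
    𝔼 ω, (smallSpinSums ι t).indicator 1 ω * exp (h ⬝ᵥ replicaSums ω) ≤
      exp (Fintype.card ι * (h 0 ^ 2 + h 1 ^ 2 + h 2 ^ 2) / 2 + |h 0 * h 2| * t) := by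
  set C := exp (Fintype.card ι * (h 0 ^ 2 + h 2 ^ 2) / 2 + |h 0 * h 2| * t) with hC
  have hcond (σ : ι → Bool) :
      𝔼 σ', (smallSpinSums ι t).indicator 1 (σ, σ') * exp (h ⬝ᵥ replicaSums (σ, σ')) ≤
        C * exp (∑ i, h 1 * spin (σ i)) := by
    by_cases hσ : |spinSum σ| ≤ t
    · refine (expect_le_expect fun σ' _ ↦ mul_le_of_le_one_left (exp_pos _).le
        (Set.indicator_le_self' (fun _ _ ↦ zero_le_one) _)).trans
        ((expect_exp_dotProduct_replicaSums_le h σ).trans ?_)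
      rw [hC]
      gcongr exp (_ + ?_) * _
      calc h 0 * h 2 * spinSum σ ≤ |h 0 * h 2| * |spinSum σ| := by
            rw [← abs_mul]
            exact le_abs_self _
        _ ≤ |h 0 * h 2| * t := by gcongr
    · simp only [smallSpinSums, Set.indicator_apply, Set.mem_ofPred_eq, hσ, false_and, if_false,
        zero_mul, expect_const_zero]
      positivity
  calc _ = 𝔼 σ : ι → Bool, 𝔼 σ' : ι → Bool,
          (smallSpinSums ι t).indicator 1 (σ, σ') * exp (h ⬝ᵥ replicaSums (σ, σ')) :=
        expect_product' _ _ _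
    _ ≤ 𝔼 σ : ι → Bool, C * exp (∑ i, h 1 * spin (σ i)) := expect_le_expect fun σ _ ↦ hcond σ
    _ ≤ C * exp ((∑ _i : ι, h 1 ^ 2) / 2) := by
        rw [← mul_expect]
        gcongr
        exact expect_exp_sum_mul_spin_le _
    _ = _ := by
        rw [hC, ← exp_add, sum_const, card_univ, nsmul_eq_mul]
        ring_nf

end Spins

section Replicas

lemma exists_sqrt_mul_le_abs_of_notMem_smallSpinSums {n : ℕ} (hn : 0 < n) {d : ℝ}
    {ω : (Fin n → Bool) × (Fin n → Bool)} (hω : ω ∉ smallSpinSums (Fin n) (n * d)) :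
    ∃ k, √n * d ≤ |((√n)⁻¹ • replicaSums ω) k| := by
  have hscale {s : ℝ} (hs : n * d < |s|) : √n * d ≤ |(√n)⁻¹ * s| := by
    have hn' : 0 < √(n : ℝ) := by positivity
    rw [abs_mul, abs_of_pos (inv_pos.2 hn'), inv_mul_eq_div, le_div_iff₀ hn', mul_right_comm,
      mul_self_sqrt n.cast_nonneg]
    exact hs.le
  rw [smallSpinSums, Set.mem_ofPred_eq, not_and_or, not_le, not_le] at hω
  exact hω.elim (fun h ↦ ⟨1, hscale h⟩) fun h ↦ ⟨2, hscale h⟩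

lemma expect_indicator_smallSpinSums_mul_exp_rescaled_le {n : ℕ} (hn : 0 < n) {d ε : ℝ}
    (hε : 0 ≤ ε) (hd : d ≤ ε) (h : Fin 3 → ℝ) :
    𝔼 ω, (smallSpinSums (Fin n) (n * d)).indicator 1 ω * exp (h ⬝ᵥ ((√n)⁻¹ • replicaSums ω)) ≤
      exp ((∑ k, ![1 + ε, 1, 1 + ε] k * h k ^ 2) / 2) := by
  have hn' : (0 : ℝ) < n := Nat.cast_pos.2 hn
  have hinv : (√(n : ℝ))⁻¹ * (√(n : ℝ))⁻¹ = (n : ℝ)⁻¹ := by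
    rw [← mul_inv, mul_self_sqrt hn'.le]
  have hle := expect_indicator_smallSpinSums_mul_exp_le (ι := Fin n) ((√n)⁻¹ • h) (n * d)
  simp only [smul_dotProduct, Pi.smul_apply, smul_eq_mul, sq,
    mul_mul_mul_comm _ (h _), hinv, Fintype.card_fin, ← mul_add, abs_mul (n : ℝ)⁻¹,
    abs_of_pos (inv_pos.2 hn'), mul_inv_cancel_left₀ hn'.ne'] at hle
  simp only [dotProduct_smul, smul_eq_mul]
  refine hle.trans (exp_le_exp.2 ?_)
  have hcross : |h 0 * h 2| ≤ (h 0 ^ 2 + h 2 ^ 2) / 2 :=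
    abs_le.2 ⟨by nlinarith [sq_nonneg (h 0 + h 2)], by nlinarith [sq_nonneg (h 0 - h 2)]⟩
  calc (h 0 * h 0 + h 1 * h 1 + h 2 * h 2) / 2 + (n : ℝ)⁻¹ * |h 0 * h 2| * (n * d)
      = (h 0 ^ 2 + h 1 ^ 2 + h 2 ^ 2) / 2 + |h 0 * h 2| * d := by field_simp
    _ ≤ (h 0 ^ 2 + h 1 ^ 2 + h 2 ^ 2) / 2 + |h 0 * h 2| * ε := by gcongr
    _ ≤ (h 0 ^ 2 + h 1 ^ 2 + h 2 ^ 2) / 2 + (h 0 ^ 2 + h 2 ^ 2) / 2 * ε := by gcongr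
    _ = _ := by
        simp only [Fin.sum_univ_three, Matrix.cons_val]
        ring

lemma sum_replicas_eq_expect (n : ℕ) (a b c t : ℝ) :
    ((2 : ℝ) ^ n)⁻¹ * ((2 : ℝ) ^ n)⁻¹ * ∑ σ : Fin n → Bool, ∑ σ' : Fin n → Bool,
      (if |∑ i, spin (σ i)| ≤ t ∧ |∑ i, spin (σ' i)| ≤ t then
        exp ((a / n) * (∑ i, spin (σ i) * spin (σ' i)) ^ 2 + (b / n) * (∑ i, spin (σ i)) ^ 2
          + (c / n) * (∑ i, spin (σ' i)) ^ 2)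
      else 0) =
    𝔼 ω, (smallSpinSums (Fin n) t).indicator 1 ω *
      exp (∑ k, ![a, b, c] k * ((√n)⁻¹ • replicaSums ω) k ^ 2) := by
  have hsq : ((√(n : ℝ))⁻¹) ^ 2 = (n : ℝ)⁻¹ := by rw [inv_pow, sq_sqrt n.cast_nonneg]
  rw [Fintype.expect_eq_sum_div_card, Fintype.sum_prod_type, Fintype.card_prod, Fintype.card_fun,
    Fintype.card_bool, Fintype.card_fin, ← mul_inv, ← div_eq_inv_mul]
  push_cast
  congr 1
  refine sum_congr rfl fun σ _ ↦ sum_congr rfl fun σ' _ ↦ ?_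
  simp [smallSpinSums, Set.indicator_apply, Fin.sum_univ_three, mul_pow, hsq, replicaSums,
    overlap, spinSum, div_eq_mul_inv, mul_assoc]

lemma eventually_mul_one_add_lt_one {x : ℝ} (hx : x < 1) :
    ∀ᶠ ε in 𝓝[>] 0, x * (1 + ε) < 1 := by
  have hcont : Tendsto (fun ε ↦ x * (1 + ε)) (𝓝[>] 0) (𝓝 (x * (1 + 0))) :=
    ((tendsto_id.const_add 1).const_mul x).mono_left nhdsWithin_le_nhds
  exact hcont.eventually_lt_const (by simpa using hx)

theorem replica_expectation_limit_general {a b c ε : ℝ} (ha : 0 ≤ a) (hb : 0 ≤ b) (hc : 0 ≤ c)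
    (haε : 2 * a * (1 + ε) < 1) (hb' : 2 * b < 1) (hcε : 2 * c * (1 + ε) < 1) {δ : ℕ → ℝ}
    (hδ : ∀ᶠ n in atTop, δ n ≤ ε) (hδ' : Tendsto (fun n : ℕ ↦ √n * δ n) atTop atTop) :
    Tendsto
      (fun n : ℕ ↦
        ((2 : ℝ) ^ n)⁻¹ * ((2 : ℝ) ^ n)⁻¹ *
          ∑ σ : Fin n → Bool, ∑ σ' : Fin n → Bool,
            if |∑ i, spin (σ i)| ≤ n * δ n ∧ |∑ i, spin (σ' i)| ≤ n * δ n then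
              exp ((a / n) * (∑ i, spin (σ i) * spin (σ' i)) ^ 2
                + (b / n) * (∑ i, spin (σ i)) ^ 2 + (c / n) * (∑ i, spin (σ' i)) ^ 2)
            else 0)
      atTop (𝓝 (√(1 - 2 * a) * √(1 - 2 * b) * √(1 - 2 * c))⁻¹) := by
  have hε : 0 ≤ ε := by
    obtain ⟨n, hn, hn'⟩ := (hδ.and (hδ'.eventually_gt_atTop 0)).exists
    exact (pos_of_mul_pos_right hn' (sqrt_nonneg _)).le.trans hn
  have hprod : (√(1 - 2 * a) * √(1 - 2 * b) * √(1 - 2 * c))⁻¹ =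
      ∏ k, (√(1 - 2 * ![a, b, c] k))⁻¹ := by
    simp [Fin.prod_univ_three]
  simp only [sum_replicas_eq_expect, hprod]
  refine tendsto_expect_mul_exp_sum_mul_sq (v := ![1 + ε, 1, 1 + ε])
    (fun n ω ↦ Set.indicator_nonneg (by simp) ω) ?_ ?_
    (tendsto_expect_indicator_mul_exp_dotProduct hδ' ?_ tendsto_expect_exp_dotProduct_replicaSums)
    ?_
  · simp [Fin.forall_fin_succ, ha, hb, hc]
  · simp [Fin.forall_fin_succ, ← mul_assoc, haε, hb', hcε]
  · filter_upwards [eventually_gt_atTop 0] with n hn ω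
    exact exists_sqrt_mul_le_abs_of_notMem_smallSpinSums hn
  · filter_upwards [hδ, eventually_gt_atTop 0] with n hn hn'
    exact expect_indicator_smallSpinSums_mul_exp_rescaled_le hn' hε hn

end Replicas

/-- **Limit of the truncated replica expectation.**
Let `σ, σ'` be independent uniform on `{−1,+1}^n`, `δ_n → 0` with `√n δ_n → ∞`, and
`Ω_n = {τ : |Σ_i τ_i| ≤ n δ_n}`. For `0 < β < 1/2`, `J ≥ 0`, `βJ < 1/2`,
`E[1_{σ ∈ Ω_n} 1_{σ' ∈ Ω_n} exp{(2β²/n)(Σ σ_i σ'_i)² + (βJ/n)(Σ σ_i)² + (βJ/n)(Σ σ'_i)²}]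
  → 1/(√(1 − 4β²)(1 − 2βJ))`. -/
theorem replica_expectation_limit (β J : ℝ) (hβ0 : 0 < β) (hβ : β < 1 / 2)
    (hJ : 0 ≤ J) (hβJ : β * J < 1 / 2) (δ : ℕ → ℝ) (hδ : Tendsto δ atTop (𝓝 0))
    (hδ' : Tendsto (fun n : ℕ => Real.sqrt n * δ n) atTop atTop) :
    Tendsto
      (fun n : ℕ =>
        ((2 : ℝ) ^ n)⁻¹ * ((2 : ℝ) ^ n)⁻¹ *
          ∑ σ : Fin n → Bool, ∑ σ' : Fin n → Bool,
            if |∑ i : Fin n, spin (σ i)| ≤ n * δ n ∧ |∑ i : Fin n, spin (σ' i)| ≤ n * δ n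
            then
              Real.exp
                ((2 * β ^ 2 / n) * (∑ i : Fin n, spin (σ i) * spin (σ' i)) ^ 2
                  + (β * J / n) * (∑ i : Fin n, spin (σ i)) ^ 2
                  + (β * J / n) * (∑ i : Fin n, spin (σ' i)) ^ 2)
            else 0)
      atTop (𝓝 (1 / (Real.sqrt (1 - 4 * β ^ 2) * (1 - 2 * β * J)))) := by
  have hlim : 1 / (√(1 - 4 * β ^ 2) * (1 - 2 * β * J)) =
      (√(1 - 2 * (2 * β ^ 2)) * √(1 - 2 * (β * J)) * √(1 - 2 * (β * J)))⁻¹ := by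
    rw [mul_assoc (√_), mul_self_sqrt (by linarith), one_div]
    ring_nf
  obtain ⟨ε, ⟨ha, hb⟩, hε⟩ :=
    ((eventually_mul_one_add_lt_one (x := 2 * (2 * β ^ 2)) (by nlinarith)).and
      (eventually_mul_one_add_lt_one (x := 2 * (β * J)) (by linarith))
      |>.and self_mem_nhdsWithin).exists
  rw [hlim]
  exact replica_expectation_limit_general (by positivity) (by positivity) (by positivity) ha
    (by linarith) hb (hδ.eventually_le_const hε) hδ'

end
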